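/- arXiv:2312.00602 — 2 statements merged into one kernel-verified Lean document; each statement's English description precedes it below -/
import Mathlib

section
/- Let n ≥ 3 be odd and let τ ∈ ℂ[t_1, t_3, t_5, …] be a nonzero polynomial. Then τ satisfies Ω_0(τ) = τ(t)τ(t') together with ∂τ/∂t_n = 0 if and only if τ satisfies Ω_0(τ) = τ(t)τ(t') together with Ω_{−pn}(τ) = 0 for every integer p ≥ 1. -/
/-- Elementary Schur polynomials `s_m`, defined in any associative `ℂ`-algebra by the
generating-function recursion `m*s_m = ∑_{k=1}^m k*x_k*s_{m-k}`, which for commuting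
arguments is equivalent to `exp(∑_{k≥1} x_k z^k) = ∑_{m≥0} s_m(x) z^m`.
The argument sequence is indexed so that `x (k+1)` is `x_{k+1}`; `x 0` is ignored. -/
noncomputable def schur {A : Type*} [Ring A] [Algebra ℂ A] (x : ℕ → A) : ℕ → A
  | 0 => 1
  | m + 1 =>
      ((m + 1 : ℂ))⁻¹ • ∑ k ∈ Finset.range (m + 1), ((k + 1 : ℂ)) • (x (k + 1) * schur x (m - k))
  decreasing_by exact Nat.lt_succ_of_le (Nat.sub_le m k)

/-- `R`: polynomial ring ℂ[t₁,t₃,t₅,…]; variable `i : ℕ` stands for `t_{2i+1}`. -/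
abbrev ROdd : Type := MvPolynomial ℕ ℂ

/-- `ℂ[t,t']`: `Sum.inl i` is `t_{2i+1}`, `Sum.inr i` is `t'_{2i+1}`. -/
abbrev RTwo : Type := MvPolynomial (ℕ ⊕ ℕ) ℂ

/-- `τ(t)·τ(t') ∈ ℂ[t,t']`. -/
noncomputable def doubling (τ : ROdd) : RTwo :=
  MvPolynomial.rename Sum.inl τ * MvPolynomial.rename Sum.inr τ

/-- The sequence ã with `ã_{2j-1} = t_{2j-1} - t'_{2j-1}` and `ã_{2j} = 0`. -/
noncomputable def aSeq : ℕ → RTwo := fun j =>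
  if Odd j then MvPolynomial.X (Sum.inl ((j - 1) / 2)) - MvPolynomial.X (Sum.inr ((j - 1) / 2))
  else 0

/-- The commuting derivations b̃ with
`b̃_{2j-1} = (2/(2j-1)) (∂/∂t'_{2j-1} - ∂/∂t_{2j-1})` and `b̃_{2j} = 0`. -/
noncomputable def bSeq : ℕ → Module.End ℂ RTwo := fun j =>
  if Odd j then
    ((2 : ℂ) / (j : ℂ)) •
      ((MvPolynomial.pderiv (Sum.inr ((j - 1) / 2))).toLinearMap -
        (MvPolynomial.pderiv (Sum.inl ((j - 1) / 2))).toLinearMap)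
  else 0

/-- `Ω_{-M}(τ) = ∑_{k≥0} s_k(ã) · s_{k+M}(b̃)(τ(t)τ(t'))`. -/
noncomputable def OmegaNeg (M : ℕ) (τ : ROdd) : RTwo :=
  ∑ᶠ k : ℕ, schur aSeq k * (schur bSeq (k + M)) (doubling τ)

namespace BKPAux

open MvPolynomial

theorem schur_zero' {A : Type*} [Ring A] [Algebra ℂ A] (x : ℕ → A) : schur x 0 = 1 := by
  rw [schur]

theorem schur_succ' {A : Type*} [Ring A] [Algebra ℂ A] (x : ℕ → A) (m : ℕ) :
    schur x (m + 1) = ((m + 1 : ℂ))⁻¹ •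
      ∑ k ∈ Finset.range (m + 1), ((k + 1 : ℂ)) • (x (k + 1) * schur x (m - k)) := by
  rw [schur]

theorem schur_succ_smul {A : Type*} [Ring A] [Algebra ℂ A] (x : ℕ → A) (m : ℕ) :
    (m + 1 : ℂ) • schur x (m + 1) =
      ∑ k ∈ Finset.range (m + 1), ((k + 1 : ℂ)) • (x (k + 1) * schur x (m - k)) := by
  rw [schur_succ', smul_smul, mul_inv_cancel₀ (Nat.cast_add_one_ne_zero m), one_smul]

theorem schur_apply (m : ℕ) (F : RTwo) :
    schur bSeq (m + 1) F = ((m + 1 : ℂ))⁻¹ •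
      ∑ k ∈ Finset.range (m + 1), ((k + 1 : ℂ)) • (bSeq (k + 1) (schur bSeq (m - k) F)) := by
  rw [schur_succ', LinearMap.smul_apply, LinearMap.sum_apply]
  rfl

/-- `b_{2i+1}` applied to a polynomial. -/
theorem bSeq_odd (i : ℕ) (F : RTwo) :
    bSeq (2 * i + 1) F = ((2 : ℂ) / ((2 * i + 1 : ℕ) : ℂ)) •
      (pderiv (Sum.inr i) F - pderiv (Sum.inl i) F) := by
  have h : (2 * i + 1 - 1) / 2 = i := by omega
  unfold bSeq
  rw [if_pos (odd_two_mul_add_one i), h]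
  rfl

theorem bSeq_even (j : ℕ) (h : ¬ Odd j) : bSeq j = 0 := by
  unfold bSeq
  rw [if_neg h]

theorem aSeq_odd (i : ℕ) : aSeq (2 * i + 1) = X (Sum.inl i) - X (Sum.inr i) := by
  have h : (2 * i + 1 - 1) / 2 = i := by omega
  unfold aSeq
  rw [if_pos (odd_two_mul_add_one i), h]

theorem aSeq_even (j : ℕ) (h : ¬ Odd j) : aSeq j = 0 := by
  unfold aSeq
  rw [if_neg h]

/-- weights -/
def wt : ℕ ⊕ ℕ → ℤ := Sum.elim (fun i => 2 * i + 1) (fun i => 2 * i + 1)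

theorem wt_hom_bSeq (j : ℕ) (F : RTwo) (d : ℤ) (h : IsWeightedHomogeneous wt F d) :
    IsWeightedHomogeneous wt (bSeq j F) (d - j) := by
  by_cases hj : Odd j
  · obtain ⟨i, rfl⟩ := hj
    rw [bSeq_odd]
    apply (weightedHomogeneousSubmodule ℂ wt _).smul_mem
    apply (weightedHomogeneousSubmodule ℂ wt _).sub_mem
    · exact IsWeightedHomogeneous.pderiv h (by simp [wt])
    · exact IsWeightedHomogeneous.pderiv h (by simp [wt])
  · rw [bSeq_even j hj]
    exact (weightedHomogeneousSubmodule ℂ wt _).zero_mem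

theorem wt_hom_schur (l : ℕ) (F : RTwo) (d : ℤ) (h : IsWeightedHomogeneous wt F d) :
    IsWeightedHomogeneous wt (schur bSeq l F) (d - l) := by
  induction l using Nat.strong_induction_on with
  | _ l ih =>
    cases l with
    | zero => simpa [schur_zero'] using h
    | succ m =>
      rw [schur_apply]
      apply (weightedHomogeneousSubmodule ℂ wt _).smul_mem
      apply (weightedHomogeneousSubmodule ℂ wt _).sum_mem
      intro k hk
      rw [Finset.mem_range] at hk
      apply (weightedHomogeneousSubmodule ℂ wt _).smul_mem
      have := wt_hom_bSeq (k + 1) _ _ (ih (m - k) (by omega))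
      have e : d - ((m - k : ℕ) : ℤ) - ((k + 1 : ℕ) : ℤ) = d - ((m + 1 : ℕ) : ℤ) := by omega
      rw [e] at this
      exact this

theorem wt_hom_neg (F : RTwo) (d : ℤ) (hd : d < 0) (h : IsWeightedHomogeneous wt F d) : F = 0 := by
  by_contra hF
  obtain ⟨m, hm⟩ := MvPolynomial.ne_zero_iff.1 hF
  have := h hm
  have h0 : 0 ≤ Finsupp.weight wt m := by
    rw [Finsupp.weight_apply]
    apply Finset.sum_nonneg
    rintro (i | i) _ <;> simp only [wt, Sum.elim_inl, Sum.elim_inr] <;> positivity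
  omega

theorem schur_finite (F : RTwo) : ∃ L, ∀ l, L ≤ l → schur bSeq l F = 0 := by
  induction F using MvPolynomial.induction_on' with
  | monomial s a =>
    refine ⟨(Finsupp.weight wt s).toNat + 1, fun l hl => ?_⟩
    refine wt_hom_neg _ _ ?_ (wt_hom_schur l _ _ (isWeightedHomogeneous_monomial wt s a rfl))
    omega
  | add p q hp hq =>
    obtain ⟨L, hL⟩ := hp
    obtain ⟨L', hL'⟩ := hq
    refine ⟨max L L', fun l hl => ?_⟩
    rw [map_add, hL l (le_trans (le_max_left _ _) hl), hL' l (le_trans (le_max_right _ _) hl),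
      add_zero]

/-- generalized Omega -/
noncomputable def Om (M : ℕ) (F : RTwo) : RTwo :=
  ∑ᶠ k : ℕ, schur aSeq k * (schur bSeq (k + M)) F

theorem Om_eq (M : ℕ) (F : RTwo) (N : ℕ) (hN : ∀ l, N ≤ l → schur bSeq l F = 0) :
    Om M F = ∑ k ∈ Finset.range N, schur aSeq k * (schur bSeq (k + M)) F := by
  unfold Om
  apply finsum_eq_sum_of_support_subset
  intro k hk
  rw [Finset.coe_range, Set.mem_Iio]
  by_contra hlt
  exact hk (by simp only [hN (k + M) (by omega), mul_zero])

theorem pderiv_aSeq_self (i : ℕ) : pderiv (Sum.inl i) (aSeq (2 * i + 1)) = 1 := by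
  rw [aSeq_odd, map_sub, pderiv_X_self, pderiv_X_of_ne (by simp), sub_zero]

theorem pderiv_aSeq_ne (i j : ℕ) (h : j ≠ 2 * i + 1) : pderiv (Sum.inl i) (aSeq j) = 0 := by
  by_cases hj : Odd j
  · obtain ⟨k, rfl⟩ := hj
    rw [aSeq_odd, map_sub, pderiv_X_of_ne (i := Sum.inl i) (j := Sum.inr k) (by simp),
      pderiv_X_of_ne, sub_zero]
    intro e
    apply h
    have := Sum.inl_injective e
    omega
  · rw [aSeq_even j hj, map_zero]

theorem pderiv_schur_a (i m : ℕ) : pderiv (Sum.inl i) (schur aSeq m) =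
    if 2 * i + 1 ≤ m then schur aSeq (m - (2 * i + 1)) else 0 := by
  induction m using Nat.strong_induction_on with
  | _ m ih =>
    cases m with
    | zero => simp [schur_zero']
    | succ m =>
      have key : (m + 1 : ℂ) • pderiv (Sum.inl i) (schur aSeq (m + 1)) =
          (m + 1 : ℂ) • (if 2 * i + 1 ≤ m + 1 then schur aSeq (m + 1 - (2 * i + 1)) else 0) := by
        rw [← Derivation.map_smul, schur_succ_smul, map_sum]
        have h1 : ∀ k ∈ Finset.range (m + 1),
            pderiv (Sum.inl i) (((k + 1 : ℂ)) • (aSeq (k + 1) * schur aSeq (m - k))) =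
            (if k = 2 * i then (k + 1 : ℂ) • schur aSeq (m - k) else 0) +
            (if 2 * i + 1 ≤ m - k then
              (k + 1 : ℂ) • (aSeq (k + 1) * schur aSeq (m - k - (2 * i + 1))) else 0) := by
          intro k hk
          rw [Derivation.map_smul, pderiv_mul, ih (m - k) (by omega), smul_add]
          congr 1
          · split_ifs with h
            · subst h
              rw [pderiv_aSeq_self, one_mul]
            · rw [pderiv_aSeq_ne _ _ (by omega), zero_mul, smul_zero]
          · split_ifs
            · rfl
            · rw [mul_zero, smul_zero]
        rw [Finset.sum_congr rfl h1, Finset.sum_add_distrib, Finset.sum_ite_eq']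
        by_cases hm : 2 * i + 1 ≤ m + 1
        · rw [if_pos hm, if_pos (Finset.mem_range.2 (by omega))]
          obtain ⟨r, rfl⟩ : ∃ r, m = r + 2 * i := ⟨m - 2 * i, by omega⟩
          have e1 : r + 2 * i - 2 * i = r := by omega
          have e2 : r + 2 * i + 1 - (2 * i + 1) = r := by omega
          rw [e1, e2]
          have h2 : ∑ k ∈ Finset.range (r + 2 * i + 1), (if 2 * i + 1 ≤ r + 2 * i - k then
              (k + 1 : ℂ) • (aSeq (k + 1) * schur aSeq (r + 2 * i - k - (2 * i + 1))) else 0)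
              = (r : ℂ) • schur aSeq r := by
            cases r with
            | zero =>
              simp only [Nat.cast_zero, zero_smul]
              apply Finset.sum_eq_zero
              intro k _
              rw [if_neg (by omega)]
            | succ r =>
              rw [Nat.cast_succ, schur_succ_smul]
              symm
              refine Eq.trans ?_ (Finset.sum_subset (s₁ := Finset.range (r + 1))
                (Finset.range_subset_range.2 (by omega)) ?_)
              · apply Finset.sum_congr rfl
                intro k hk
                rw [Finset.mem_range] at hk
                have e3 : r + 1 + 2 * i - k - (2 * i + 1) = r - k := by omega
                rw [if_pos (by omega), e3]
              · intro k _ hk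
                rw [Finset.mem_range] at hk
                rw [if_neg (by omega)]
          rw [h2, ← add_smul]
          congr 1
          push_cast
          ring
        · rw [if_neg hm, if_neg (by rw [Finset.mem_range]; omega), zero_add, smul_zero]
          apply Finset.sum_eq_zero
          intro k _
          rw [if_neg (by omega)]
      exact smul_right_injective _ (Nat.cast_add_one_ne_zero m) key

theorem pderiv_comm' {σ : Type*} (i j : σ) (F : MvPolynomial σ ℂ) :
    pderiv i (pderiv j F) = pderiv j (pderiv i F) := by
  classical
  ext m
  rw [coeff_pderiv, coeff_pderiv, coeff_pderiv, coeff_pderiv, add_right_comm]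
  by_cases h : i = j
  · subst h; rfl
  · simp [h, Ne.symm h]
    ring

theorem pderiv_bSeq (v : ℕ ⊕ ℕ) (j : ℕ) (F : RTwo) :
    pderiv v (bSeq j F) = bSeq j (pderiv v F) := by
  by_cases hj : Odd j
  · obtain ⟨i, rfl⟩ := hj
    rw [bSeq_odd, bSeq_odd, Derivation.map_smul, map_sub, pderiv_comm' v, pderiv_comm' v]
  · rw [bSeq_even j hj, LinearMap.zero_apply, LinearMap.zero_apply, map_zero]

theorem pderiv_schur_b (v : ℕ ⊕ ℕ) (l : ℕ) (F : RTwo) :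
    pderiv v (schur bSeq l F) = schur bSeq l (pderiv v F) := by
  induction l using Nat.strong_induction_on with
  | _ l ih =>
    cases l with
    | zero => simp [schur_zero']
    | succ m =>
      rw [schur_apply, schur_apply, Derivation.map_smul, map_sum]
      congr 1
      apply Finset.sum_congr rfl
      intro k _
      rw [Derivation.map_smul, pderiv_bSeq, ih _ (by omega)]

theorem pderiv_Om (i M : ℕ) (F : RTwo) :
    pderiv (Sum.inl i) (Om M F) = Om (M + (2 * i + 1)) F + Om M (pderiv (Sum.inl i) F) := by
  obtain ⟨L, hL⟩ := schur_finite F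
  have hL' : ∀ l, L ≤ l → schur bSeq l (pderiv (Sum.inl i) F) = 0 := by
    intro l hl
    rw [← pderiv_schur_b, hL l hl, map_zero]
  rw [Om_eq M F (2 * i + 1 + L) (fun l hl => hL l (by omega)),
    Om_eq M (pderiv (Sum.inl i) F) (2 * i + 1 + L) (fun l hl => hL' l (by omega)),
    Om_eq (M + (2 * i + 1)) F L hL, map_sum]
  simp only [pderiv_mul, pderiv_schur_b, Finset.sum_add_distrib]
  congr 1
  rw [Finset.sum_range_add, Finset.sum_eq_zero, zero_add]
  · apply Finset.sum_congr rfl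
    intro k _
    rw [pderiv_schur_a, if_pos (by omega)]
    congr 2
    · congr 1; omega
    · congr 1; omega
  · intro k hk
    rw [Finset.mem_range] at hk
    rw [pderiv_schur_a, if_neg (by omega), zero_mul]

/-- restriction to the diagonal -/
noncomputable def diag : RTwo →ₐ[ℂ] ROdd := rename (Sum.elim id id)

theorem diag_inl (f : ROdd) : diag (rename Sum.inl f) = f := by
  unfold diag
  rw [rename_rename]
  exact rename_id_apply f

theorem diag_inr (f : ROdd) : diag (rename Sum.inr f) = f := by
  unfold diag
  rw [rename_rename]
  exact rename_id_apply f

theorem diag_aSeq (j : ℕ) : diag (aSeq j) = 0 := by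
  by_cases hj : Odd j
  · obtain ⟨i, rfl⟩ := hj
    rw [aSeq_odd, map_sub]
    unfold diag
    rw [rename_X, rename_X]
    exact sub_self _
  · rw [aSeq_even j hj, map_zero]

theorem diag_schur_a (m : ℕ) : diag (schur aSeq (m + 1)) = 0 := by
  rw [schur_succ', map_smul, map_sum, Finset.sum_eq_zero, smul_zero]
  intro k _
  rw [map_smul, map_mul, diag_aSeq, zero_mul, smul_zero]

theorem diag_Om (M : ℕ) (F : RTwo) : diag (Om M F) = diag (schur bSeq M F) := by
  obtain ⟨L, hL⟩ := schur_finite F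
  rw [Om_eq M F (L + 1) (fun l hl => hL l (by omega)), map_sum, Finset.sum_range_succ',
    Finset.sum_eq_zero, zero_add, schur_zero', one_mul, zero_add]
  intro k _
  rw [map_mul, diag_schur_a, zero_mul]

theorem diag_schur_eq_zero (i : ℕ) (F : RTwo) (h : Om 0 F = F) :
    diag (schur bSeq (2 * i + 1) F) = 0 := by
  have h1 := pderiv_Om i 0 F
  have h2 := congrArg diag h1
  rw [h, map_add, diag_Om, diag_Om, zero_add, schur_zero'] at h2
  simpa using h2

theorem pderiv_inl_inl (i : ℕ) (f : ROdd) :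
    pderiv (Sum.inl i) (rename Sum.inl f : RTwo) = rename Sum.inl (pderiv i f) :=
  pderiv_rename Sum.inl_injective _ _

theorem pderiv_inr_inr (i : ℕ) (f : ROdd) :
    pderiv (Sum.inr i) (rename Sum.inr f : RTwo) = rename Sum.inr (pderiv i f) :=
  pderiv_rename Sum.inr_injective _ _

theorem pderiv_inl_inr (i : ℕ) (f : ROdd) :
    pderiv (Sum.inl i) (rename Sum.inr f : RTwo) = 0 := by
  classical
  apply pderiv_eq_zero_of_notMem_vars
  intro h
  have := vars_rename Sum.inr f h
  simp at this

theorem pderiv_inr_inl (i : ℕ) (f : ROdd) :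
    pderiv (Sum.inr i) (rename Sum.inl f : RTwo) = 0 := by
  classical
  apply pderiv_eq_zero_of_notMem_vars
  intro h
  have := vars_rename Sum.inl f h
  simp at this

/-- tensor product of two polynomials -/
noncomputable def tens (f g : ROdd) : RTwo := rename Sum.inl f * rename Sum.inr g

theorem diag_bSeq_tens (i : ℕ) (f g : ROdd) : diag (bSeq (2 * i + 1) (tens f g)) =
    ((2 : ℂ) / ((2 * i + 1 : ℕ) : ℂ)) • (f * pderiv i g - pderiv i f * g) := by
  rw [bSeq_odd, map_smul, map_sub, tens, pderiv_mul, pderiv_mul, pderiv_inl_inl, pderiv_inl_inr,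
    pderiv_inr_inl, pderiv_inr_inr, zero_mul, mul_zero, zero_add, add_zero, map_mul, map_mul,
    diag_inl, diag_inl, diag_inr, diag_inr]

/-- The invariant `τ(t) U = σ(t) V` is preserved by `b_j`. -/
theorem inv_bSeq (f g : ROdd) (hg : g ≠ 0) (j : ℕ)
    (hj : ∀ i, j = 2 * i + 1 → pderiv i f * g = f * pderiv i g) (U V : RTwo)
    (h : rename Sum.inl g * U = rename Sum.inl f * V) :
    rename Sum.inl g * bSeq j U = rename Sum.inl f * bSeq j V := by
  by_cases hjo : Odd j
  · obtain ⟨i, rfl⟩ := hjo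
    have hi := congrArg (rename (Sum.inl : ℕ → ℕ ⊕ ℕ)) (hj i rfl)
    rw [map_mul, map_mul] at hi
    have hG : (rename Sum.inl g : RTwo) ≠ 0 := by
      intro h0
      exact hg (rename_injective _ Sum.inl_injective (by rw [h0, map_zero]))
    have hr := congrArg (pderiv (Sum.inr i)) h
    have hl := congrArg (pderiv (Sum.inl i)) h
    rw [pderiv_mul, pderiv_mul, pderiv_inr_inl, pderiv_inr_inl, zero_mul, zero_mul, zero_add,
      zero_add] at hr
    rw [pderiv_mul, pderiv_mul, pderiv_inl_inl, pderiv_inl_inl] at hl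
    have hx : rename Sum.inl (pderiv i g) * U = rename Sum.inl (pderiv i f) * V := by
      apply mul_left_cancel₀ hG
      linear_combination (rename Sum.inl (pderiv i g)) * h - V * hi
    rw [bSeq_odd, bSeq_odd, mul_smul_comm, mul_smul_comm]
    congr 1
    linear_combination hr - hl + hx
  · rw [bSeq_even j hjo, LinearMap.zero_apply, LinearMap.zero_apply, mul_zero, mul_zero]

theorem inv_schur (f g : ROdd) (hg : g ≠ 0) (l : ℕ)
    (hl : ∀ i, 2 * i + 1 ≤ l → pderiv i f * g = f * pderiv i g) :
    rename Sum.inl g * schur bSeq l (tens f g) = rename Sum.inl f * schur bSeq l (tens g g) := by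
  induction l using Nat.strong_induction_on with
  | _ l ih =>
    cases l with
    | zero =>
      simp only [schur_zero', Module.End.one_apply, tens]
      ring
    | succ m =>
      rw [schur_apply, schur_apply, mul_smul_comm, mul_smul_comm, Finset.mul_sum, Finset.mul_sum]
      congr 1
      apply Finset.sum_congr rfl
      intro k hk
      rw [Finset.mem_range] at hk
      rw [mul_smul_comm, mul_smul_comm]
      congr 1
      apply inv_bSeq f g hg
      · intro i hi
        exact hl i (by omega)
      · exact ih (m - k) (by omega) (fun i hi => hl i (by omega))

theorem inv_sum (f g : ROdd) (hg : g ≠ 0) (i : ℕ)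
    (ih : ∀ i' < i, pderiv i' f * g = f * pderiv i' g) :
    rename Sum.inl g * (∑ k ∈ Finset.range (2 * i),
          ((k + 1 : ℂ)) • (bSeq (k + 1) (schur bSeq (2 * i - k) (tens f g)))) =
      rename Sum.inl f * (∑ k ∈ Finset.range (2 * i),
          ((k + 1 : ℂ)) • (bSeq (k + 1) (schur bSeq (2 * i - k) (tens g g)))) := by
  rw [Finset.mul_sum, Finset.mul_sum]
  apply Finset.sum_congr rfl
  intro k hk
  rw [Finset.mem_range] at hk
  rw [mul_smul_comm, mul_smul_comm]
  refine congrArg (fun z : RTwo => (k + 1 : ℂ) • z) ?_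
  apply inv_bSeq f g hg
  · intro i' hi
    exact ih i' (by omega)
  · exact inv_schur f g hg _ (fun i' hi => ih i' (by omega))

theorem wronskian (f g : ROdd) (hg : g ≠ 0) (hf : Om 0 (tens f g) = tens f g)
    (hgg : Om 0 (tens g g) = tens g g) (i : ℕ) : pderiv i f * g = f * pderiv i g := by
  induction i using Nat.strong_induction_on with
  | _ i ih =>
    have h1 := diag_schur_eq_zero i _ hf
    have h2 := diag_schur_eq_zero i _ hgg
    rw [schur_apply, map_smul, smul_eq_zero_iff_right
      (inv_ne_zero (Nat.cast_add_one_ne_zero _)), Finset.sum_range_succ, map_add] at h1 h2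
    have h3 := congrArg diag (inv_sum f g hg i ih)
    rw [map_mul, map_mul, diag_inl, diag_inl] at h3
    have e : ∀ h : ROdd, diag (((2 * i : ℕ) + 1 : ℂ) •
        bSeq (2 * i + 1) (schur bSeq (2 * i - 2 * i) (tens h g))) =
        (2 : ℂ) • (h * pderiv i g - pderiv i h * g) := by
      intro h
      rw [Nat.sub_self, schur_zero', Module.End.one_apply, map_smul, diag_bSeq_tens, smul_smul]
      congr 1
      have : ((2 * i + 1 : ℕ) : ℂ) ≠ 0 := Nat.cast_ne_zero.2 (by omega)
      push_cast at this ⊢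
      field_simp
    rw [e] at h1 h2
    have h4 : g * pderiv i g - pderiv i g * g = 0 := by ring
    rw [h4, smul_zero, add_zero] at h2
    rw [h2, mul_zero] at h3
    have h5 := (mul_eq_zero.1 h3).resolve_left hg
    rw [h5, zero_add, smul_eq_zero_iff_right two_ne_zero] at h1
    exact (sub_eq_zero.1 h1).symm

theorem coeff_iter (i : ℕ) (k : ℕ) (f : ROdd) (m : ℕ →₀ ℕ)
    (h : coeff (m + Finsupp.single i k) f = 0) : coeff m ((pderiv i)^[k] f) = 0 := by
  induction k generalizing m with
  | zero => simpa using h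
  | succ k ih =>
    rw [Function.iterate_succ_apply', coeff_pderiv, ih, zero_mul]
    rw [add_assoc, ← Finsupp.single_add, add_comm 1 k]
    exact h

theorem pderiv_nilp (i : ℕ) (f : ROdd) : ∃ k, (pderiv i)^[k] f = 0 := by
  refine ⟨degreeOf i f + 1, ?_⟩
  ext m
  rw [coeff_zero]
  apply coeff_iter
  by_contra h
  have := (degreeOf_lt_iff (n := i) (f := f) (d := degreeOf i f + 1) (by omega)).1 (by omega)
    _ (mem_support_iff.2 h)
  simp at this
  omega

theorem final_step (i : ℕ) (g : ROdd) (hg : g ≠ 0)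
    (h : pderiv i (pderiv i g) * g = pderiv i g * pderiv i g) : pderiv i g = 0 := by
  have P : ∀ k, (pderiv i)^[k + 1] g * g = pderiv i g * (pderiv i)^[k] g := by
    intro k
    induction k with
    | zero => simp
    | succ k ih =>
      have hd := congrArg (pderiv i) ih
      rw [pderiv_mul, pderiv_mul, ← Function.iterate_succ_apply' (pderiv i) (k + 1),
        ← Function.iterate_succ_apply' (pderiv i) k] at hd
      apply mul_right_cancel₀ hg
      linear_combination g * hd + (pderiv i)^[k] g * h - pderiv i g * ih
  by_contra hne
  have Q : ∀ k, (pderiv i)^[k] g ≠ 0 := by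
    intro k
    induction k with
    | zero => exact hg
    | succ k ih =>
      intro h0
      have := P k
      rw [h0, zero_mul] at this
      exact mul_ne_zero hne ih this.symm
  obtain ⟨k, hk⟩ := pderiv_nilp i g
  exact Q k hk

theorem pderiv_tens (i : ℕ) (f g : ROdd) :
    pderiv (Sum.inl i) (tens f g) = tens (pderiv i f) g := by
  rw [tens, pderiv_mul, pderiv_inl_inl, pderiv_inl_inr, mul_zero, add_zero, tens]

theorem tens_zero (g : ROdd) : tens 0 g = 0 := by
  rw [tens, map_zero, zero_mul]

theorem Om_zero (M : ℕ) : Om M 0 = 0 := by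
  simp [Om]

theorem main (n : ℕ) (hodd : Odd n) (τ : ROdd) (hτ : τ ≠ 0) :
    (OmegaNeg 0 τ = doubling τ ∧ MvPolynomial.pderiv ((n - 1) / 2) τ = 0) ↔
      (OmegaNeg 0 τ = doubling τ ∧ ∀ p : ℕ, 1 ≤ p → OmegaNeg (p * n) τ = 0) := by
  obtain ⟨i, rfl⟩ := hodd
  have hi : (2 * i + 1 - 1) / 2 = i := by omega
  rw [hi]
  change (Om 0 (tens τ τ) = tens τ τ ∧ _) ↔
    (Om 0 (tens τ τ) = tens τ τ ∧ ∀ p : ℕ, 1 ≤ p → Om (p * (2 * i + 1)) (tens τ τ) = 0)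
  refine and_congr_right fun h0 => ⟨fun h => ?_, fun h => ?_⟩
  · have hder : pderiv (Sum.inl i) (tens τ τ) = 0 := by rw [pderiv_tens, h, tens_zero]
    intro p hp
    induction p, hp using Nat.le_induction with
    | base =>
      have := pderiv_Om i 0 (tens τ τ)
      rw [h0, hder, Om_zero, add_zero, zero_add] at this
      rw [one_mul]
      exact this.symm
    | succ p hp ih =>
      have := pderiv_Om i (p * (2 * i + 1)) (tens τ τ)
      rw [ih, map_zero, hder, Om_zero, add_zero] at this
      rw [add_mul, one_mul]
      exact this.symm
  · have h1 := h 1 le_rfl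
    have := pderiv_Om i 0 (tens τ τ)
    rw [one_mul] at h1
    rw [h0, zero_add, h1, zero_add, pderiv_tens] at this
    exact final_step i τ hτ (wronskian _ _ hτ this.symm h0 i)

end BKPAux

/-- for odd `n ≥ 3` and nonzero `τ ∈ ℂ[t₁,t₃,…]`, the pair of conditions
(BKP bilinear identity `Ω₀(τ) = τ(t)τ(t')` and `∂τ/∂t_n = 0`) is equivalent to the pair
(BKP bilinear identity and `Ω_{-pn}(τ) = 0` for all `p ≥ 1`).
Here `t_n` is variable `(n-1)/2` of `ROdd`. -/
theorem bkp_reduction_equiv (n : ℕ) (hodd : Odd n) (hn : 3 ≤ n) (τ : ROdd) (hτ : τ ≠ 0) :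
    (OmegaNeg 0 τ = doubling τ ∧ MvPolynomial.pderiv ((n - 1) / 2) τ = 0) ↔
      (OmegaNeg 0 τ = doubling τ ∧ ∀ p : ℕ, 1 ≤ p → OmegaNeg (p * n) τ = 0) := by
  exact BKPAux.main n hodd τ hτ
end

section
/- Let n ≥ 3 be odd. If a nonzero polynomial τ ∈ ℂ[t_1, t_3, t_5, …] is a tau-function of the n-th Sawada-Kotera hierarchy, then ∂τ/∂t_{(2j−1)n} = 0 for every integer j ≥ 1. -/
open MvPolynomial in
/-- polynomials whose monomials `m` all satisfy `weight m + s < d` -/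
noncomputable def lowSub {σ : Type*} (w : σ → ℕ) (d s : ℕ) : Submodule ℂ (MvPolynomial σ ℂ) where
  carrier := {P | ∀ m : σ →₀ ℕ, d ≤ Finsupp.weight w m + s → coeff m P = 0}
  add_mem' := by
    intro a b ha hb m hm
    rw [coeff_add, ha m hm, hb m hm, add_zero]
  zero_mem' := by
    intro m _
    exact coeff_zero m
  smul_mem' := by
    intro c a ha m hm
    rw [coeff_smul, ha m hm, smul_zero]

theorem lowSub_pderiv {σ : Type*} (w : σ → ℕ) (d s : ℕ) (i : σ) (P : MvPolynomial σ ℂ)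
    (h : P ∈ lowSub w d s) : MvPolynomial.pderiv i P ∈ lowSub w d (s + w i) := by
  intro m hm
  rw [MvPolynomial.coeff_pderiv, h, zero_mul]
  rw [map_add, Finsupp.weight_single]
  simp only [smul_eq_mul, one_mul]
  omega

theorem lowSub_eq_zero {σ : Type*} (w : σ → ℕ) (d s : ℕ) (hs : d ≤ s) (P : MvPolynomial σ ℂ)
    (h : P ∈ lowSub w d s) : P = 0 := by
  ext m
  rw [MvPolynomial.coeff_zero]
  exact h m (by omega)

theorem exists_lowSub {σ : Type*} (w : σ → ℕ) (P : MvPolynomial σ ℂ) :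
    ∃ d, P ∈ lowSub w d 0 := by
  refine ⟨P.support.sup (Finsupp.weight w) + 1, ?_⟩
  intro m hm
  by_contra hne
  have := Finset.le_sup (f := Finsupp.weight w) (MvPolynomial.mem_support_iff.mpr hne)
  omega

theorem pderiv_iter_zero {σ : Type*} (i : σ) (P : MvPolynomial σ ℂ) :
    ∃ r : ℕ, (fun Q => MvPolynomial.pderiv i Q)^[r] P = 0 := by
  obtain ⟨d, hd⟩ := exists_lowSub (fun _ => 1) P
  refine ⟨d, lowSub_eq_zero (fun _ => 1) d d le_rfl _ ?_⟩
  have : ∀ r : ℕ, (fun Q => MvPolynomial.pderiv i Q)^[r] P ∈ lowSub (fun _ : σ => 1) d r := by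
    intro r
    induction r with
    | zero => exact hd
    | succ r ih =>
      rw [Function.iterate_succ_apply']
      exact lowSub_pderiv (fun _ => 1) d r i _ ih
  exact this d

theorem pderiv_comm' {σ : Type*} (i j : σ) (P : MvPolynomial σ ℂ) :
    MvPolynomial.pderiv i (MvPolynomial.pderiv j P)
      = MvPolynomial.pderiv j (MvPolynomial.pderiv i P) := by
  ext m
  simp only [MvPolynomial.coeff_pderiv]
  by_cases h : i = j
  · subst h; rfl
  · have h' : j ≠ i := fun e => h e.symm
    rw [add_right_comm]
    simp [h, h']
    ring

theorem schur_zero {A : Type*} [Ring A] [Algebra ℂ A] (x : ℕ → A) : schur x 0 = 1 := by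
  rw [schur]

theorem schur_succ {A : Type*} [Ring A] [Algebra ℂ A] (x : ℕ → A) (m : ℕ) :
    schur x (m + 1) = ((m + 1 : ℂ))⁻¹ •
      ∑ k ∈ Finset.range (m + 1), ((k + 1 : ℂ)) • (x (k + 1) * schur x (m - k)) := by
  rw [schur]

theorem schur_succ' {A : Type*} [Ring A] [Algebra ℂ A] (x : ℕ → A) (m : ℕ) :
    ((m + 1 : ℂ)) • schur x (m + 1) =
      ∑ k ∈ Finset.range (m + 1), ((k + 1 : ℂ)) • (x (k + 1) * schur x (m - k)) := by
  rw [schur_succ, smul_smul, mul_inv_cancel₀, one_smul]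
  exact_mod_cast Nat.succ_ne_zero m

theorem schur_succ_apply {V : Type*} [AddCommGroup V] [Module ℂ V] (x : ℕ → Module.End ℂ V)
    (m : ℕ) (F : V) :
    schur x (m + 1) F = ((m + 1 : ℂ))⁻¹ •
      ∑ k ∈ Finset.range (m + 1), ((k + 1 : ℂ)) • (x (k + 1) (schur x (m - k) F)) := by
  rw [schur_succ]
  simp [LinearMap.sum_apply]

/-- weights on the doubled variables -/
def wt2 : ℕ ⊕ ℕ → ℕ := Sum.elim (fun i => 2 * i + 1) (fun i => 2 * i + 1)

theorem bSeq_even (j : ℕ) (h : ¬ Odd j) : bSeq j = 0 := by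
  simp [bSeq, h]

theorem bSeq_odd (i : ℕ) (P : RTwo) : bSeq (2 * i + 1) P = ((2 : ℂ) / ((2 * i + 1 : ℕ) : ℂ)) •
      (MvPolynomial.pderiv (Sum.inr i) P - MvPolynomial.pderiv (Sum.inl i) P) := by
  have : Odd (2 * i + 1) := ⟨i, rfl⟩
  have h2 : (2 * i + 1 - 1) / 2 = i := by omega
  rw [bSeq, if_pos this, h2]
  rfl

theorem bSeq_low (d s j : ℕ) (P : RTwo) (h : P ∈ lowSub wt2 d s) :
    bSeq j P ∈ lowSub wt2 d (s + j) := by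
  by_cases hj : Odd j
  · obtain ⟨i, rfl⟩ := hj
    rw [bSeq_odd]
    exact Submodule.smul_mem _ _ (Submodule.sub_mem _
      (lowSub_pderiv wt2 d s (Sum.inr i) P h) (lowSub_pderiv wt2 d s (Sum.inl i) P h))
  · rw [bSeq_even j hj]
    exact Submodule.zero_mem _

theorem schur_bSeq_low (d : ℕ) (P : RTwo) (h : P ∈ lowSub wt2 d 0) (m : ℕ) :
    schur bSeq m P ∈ lowSub wt2 d m := by
  induction m using Nat.strong_induction_on with
  | _ m ih =>
    cases m with
    | zero => rw [schur_zero]; exact h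
    | succ m =>
      rw [schur_succ_apply]
      refine Submodule.smul_mem _ _ (Submodule.sum_mem _ fun k hk => Submodule.smul_mem _ _ ?_)
      have hk' := Finset.mem_range.mp hk
      have := bSeq_low d (m - k) (k + 1) _ (ih (m - k) (by omega))
      rwa [show m - k + (k + 1) = m + 1 by omega] at this

theorem schur_bSeq_vanish (P : RTwo) : ∃ N, ∀ m, N ≤ m → schur bSeq m P = 0 := by
  obtain ⟨d, hd⟩ := exists_lowSub wt2 P
  exact ⟨d, fun m hm => lowSub_eq_zero wt2 d m hm _ (schur_bSeq_low d P hd m)⟩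

theorem finsum_eq_range (P : RTwo) (M N : ℕ) (hN : ∀ m, N ≤ m → schur bSeq m P = 0) :
    (∑ᶠ k : ℕ, schur aSeq k * (schur bSeq (k + M)) P)
      = ∑ k ∈ Finset.range N, schur aSeq k * (schur bSeq (k + M)) P := by
  apply finsum_eq_sum_of_support_subset
  intro k hk
  by_contra hne
  apply hk
  have : N ≤ k := by simpa using hne
  simp only [hN (k + M) (by omega), mul_zero]

/-- commutation of `∂` with the derivations -/
theorem bSeq_pderiv (v : ℕ ⊕ ℕ) (j : ℕ) (P : RTwo) :
    bSeq j (MvPolynomial.pderiv v P) = MvPolynomial.pderiv v (bSeq j P) := by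
  by_cases hj : Odd j
  · obtain ⟨i, rfl⟩ := hj
    rw [bSeq_odd, bSeq_odd, Derivation.map_smul, map_sub, pderiv_comm' _ v, pderiv_comm' _ v]
  · rw [bSeq_even j hj]; simp

theorem schur_bSeq_pderiv (v : ℕ ⊕ ℕ) (m : ℕ) (P : RTwo) :
    schur bSeq m (MvPolynomial.pderiv v P) = MvPolynomial.pderiv v (schur bSeq m P) := by
  induction m using Nat.strong_induction_on with
  | _ m ih =>
    cases m with
    | zero => rw [schur_zero]; rfl
    | succ m =>
      rw [schur_succ_apply, schur_succ_apply, Derivation.map_smul, map_sum]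
      congr 1
      refine Finset.sum_congr rfl fun k hk => ?_
      rw [ih (m - k) (by omega), bSeq_pderiv, Derivation.map_smul]

theorem pderiv_aSeq (i j : ℕ) : MvPolynomial.pderiv (Sum.inl i) (aSeq j)
    = if j = 2 * i + 1 then 1 else 0 := by
  by_cases hj : Odd j
  · obtain ⟨l, rfl⟩ := hj
    have h2 : (2 * l + 1 - 1) / 2 = l := by omega
    rw [aSeq, if_pos ⟨l, rfl⟩, h2, map_sub, MvPolynomial.pderiv_X, MvPolynomial.pderiv_X]
    by_cases h : l = i
    · subst h; simp
    · have : ¬ (2 * l + 1 = 2 * i + 1) := by omega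
      simp [h]
  · have : j ≠ 2 * i + 1 := by rintro rfl; exact hj ⟨i, rfl⟩
    rw [aSeq, if_neg hj, if_neg this, map_zero]

theorem pderiv_schur_aSeq (i m : ℕ) : MvPolynomial.pderiv (Sum.inl i) (schur aSeq m)
    = if 2 * i + 1 ≤ m then schur aSeq (m - (2 * i + 1)) else 0 := by
  induction m using Nat.strong_induction_on with
  | _ m ih =>
    cases m with
    | zero => rw [schur_zero]; simp
    | succ m =>
      have hm0 : ((m + 1 : ℂ)) ≠ 0 := by exact_mod_cast Nat.succ_ne_zero m
      have key : ((m + 1 : ℂ)) • MvPolynomial.pderiv (Sum.inl i) (schur aSeq (m + 1))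
          = ((m + 1 : ℂ)) •
            (if 2 * i + 1 ≤ m + 1 then schur aSeq (m + 1 - (2 * i + 1)) else 0) := by
        rw [← Derivation.map_smul, schur_succ', map_sum]
        have e1 : ∀ k ∈ Finset.range (m + 1),
            MvPolynomial.pderiv (Sum.inl i)
              (((k + 1 : ℂ)) • (aSeq (k + 1) * schur aSeq (m - k)))
            = (if k = 2 * i then ((k + 1 : ℂ)) • schur aSeq (m - k) else 0)
              + (if 2 * i + 1 ≤ m - k then
                  ((k + 1 : ℂ)) • (aSeq (k + 1) * schur aSeq (m - k - (2 * i + 1))) else 0) := by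
          intro k hk
          rw [Derivation.map_smul, MvPolynomial.pderiv_mul, pderiv_aSeq, ih (m - k) (by omega)]
          by_cases h1 : k = 2 * i <;> by_cases h2 : 2 * i + 1 ≤ m - k <;> simp [h1, h2]
        rw [Finset.sum_congr rfl e1, Finset.sum_add_distrib, Finset.sum_ite_eq']
        by_cases hle : 2 * i + 1 ≤ m + 1
        · rw [if_pos hle, if_pos (Finset.mem_range.mpr (by omega))]
          rw [← Finset.sum_filter]
          obtain ⟨q, hq⟩ : ∃ q, m = q + 2 * i := ⟨m - 2 * i, by omega⟩
          subst hq
          rw [show q + 2 * i + 1 - (2 * i + 1) = q by omega, show q + 2 * i - 2 * i = q by omega]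
          cases q with
          | zero =>
            rw [Finset.sum_eq_zero]
            · push_cast; simp
            · intro k hk
              have := (Finset.mem_filter.mp hk).2
              omega
          | succ q =>
            have hf : Finset.filter (fun k => 2 * i + 1 ≤ q + 1 + 2 * i - k)
                (Finset.range (q + 1 + 2 * i + 1)) = Finset.range (q + 1) := by
              ext k
              simp only [Finset.mem_filter, Finset.mem_range]
              omega
            rw [hf]
            have e2 : ∀ k ∈ Finset.range (q + 1),
                ((k + 1 : ℂ)) • (aSeq (k + 1) * schur aSeq (q + 1 + 2 * i - k - (2 * i + 1)))
                = ((k + 1 : ℂ)) • (aSeq (k + 1) * schur aSeq (q - k)) := by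
              intro k hk
              rw [show q + 1 + 2 * i - k - (2 * i + 1) = q - k by omega]
            rw [Finset.sum_congr rfl e2, ← schur_succ', ← add_smul]
            congr 1
            push_cast
            ring
        · rw [if_neg hle, if_neg (by simp; omega), Finset.sum_eq_zero]
          · simp
          · intro k hk
            rw [if_neg (by omega)]
      have := congrArg (fun z => ((m + 1 : ℂ))⁻¹ • z) key
      simpa only [smul_smul, inv_mul_cancel₀ hm0, one_smul] using this

/-- the diagonal restriction -/
noncomputable def diag : RTwo →ₐ[ℂ] ROdd := MvPolynomial.rename (Sum.elim id id)

/-- the swap -/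
noncomputable def swp : RTwo →ₐ[ℂ] RTwo := MvPolynomial.rename Sum.swap

/-- the product of a polynomial in the first and one in the second family -/
noncomputable def ten (u v : ROdd) : RTwo :=
  MvPolynomial.rename Sum.inl u * MvPolynomial.rename Sum.inr v

theorem diag_ten (u v : ROdd) : diag (ten u v) = u * v := by
  simp only [diag, ten, map_mul, MvPolynomial.rename_rename]
  have h1 : (Sum.elim id id : ℕ ⊕ ℕ → ℕ) ∘ Sum.inl = id := rfl
  have h2 : (Sum.elim id id : ℕ ⊕ ℕ → ℕ) ∘ Sum.inr = id := rfl
  rw [h1, h2, MvPolynomial.rename_id]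
  rfl

theorem swp_ten (u v : ROdd) : swp (ten u v) = ten v u := by
  simp only [swp, ten, map_mul, MvPolynomial.rename_rename]
  have h1 : (Sum.swap : ℕ ⊕ ℕ → ℕ ⊕ ℕ) ∘ Sum.inl = Sum.inr := rfl
  have h2 : (Sum.swap : ℕ ⊕ ℕ → ℕ ⊕ ℕ) ∘ Sum.inr = Sum.inl := rfl
  rw [h1, h2, mul_comm]

theorem diag_swp (P : RTwo) : diag (swp P) = diag P := by
  simp only [diag, swp, MvPolynomial.rename_rename]
  congr 2
  ext x
  cases x <;> rfl

theorem pderiv_inl_inr (i : ℕ) (v : ROdd) :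
    MvPolynomial.pderiv (Sum.inl i) (MvPolynomial.rename (Sum.inr : ℕ → ℕ ⊕ ℕ) v) = 0 := by
  apply MvPolynomial.pderiv_eq_zero_of_notMem_vars
  intro h
  classical
  have := MvPolynomial.vars_rename _ _ h
  simp at this

theorem pderiv_inr_inl (i : ℕ) (v : ROdd) :
    MvPolynomial.pderiv (Sum.inr i) (MvPolynomial.rename (Sum.inl : ℕ → ℕ ⊕ ℕ) v) = 0 := by
  apply MvPolynomial.pderiv_eq_zero_of_notMem_vars
  intro h
  classical
  have := MvPolynomial.vars_rename _ _ h
  simp at this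

theorem pderiv_inl_ten (i : ℕ) (u v : ROdd) :
    MvPolynomial.pderiv (Sum.inl i) (ten u v) = ten (MvPolynomial.pderiv i u) v := by
  rw [ten, MvPolynomial.pderiv_mul, pderiv_inl_inr, MvPolynomial.pderiv_rename Sum.inl_injective,
    mul_zero, add_zero, ten]

theorem pderiv_inr_ten (i : ℕ) (u v : ROdd) :
    MvPolynomial.pderiv (Sum.inr i) (ten u v) = ten u (MvPolynomial.pderiv i v) := by
  rw [ten, MvPolynomial.pderiv_mul, pderiv_inr_inl, MvPolynomial.pderiv_rename Sum.inr_injective,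
    zero_mul, zero_add, ten]

theorem swp_bSeq (j : ℕ) (P : RTwo) : swp (bSeq j P) = (-1 : ℂ) ^ j • bSeq j (swp P) := by
  by_cases hj : Odd j
  · obtain ⟨i, rfl⟩ := hj
    have h1 := MvPolynomial.pderiv_rename (R := ℂ) (Sum.swap_leftInverse (α := ℕ) (β := ℕ)).injective
      (x := Sum.inl i) (p := P)
    have h2 := MvPolynomial.pderiv_rename (R := ℂ) (Sum.swap_leftInverse (α := ℕ) (β := ℕ)).injective
      (x := Sum.inr i) (p := P)
    simp only [Sum.swap_inl, Sum.swap_inr] at h1 h2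
    rw [bSeq_odd, bSeq_odd, map_smul, map_sub, swp, h1, h2, pow_succ, pow_mul]
    simp only [even_two, Even.neg_pow, one_pow, one_mul, neg_smul, one_smul, ← smul_neg, neg_sub]
  · rw [bSeq_even j hj]; simp

/-- truncated sequence of derivations -/
noncomputable def bT (K : ℕ) : ℕ → Module.End ℂ RTwo := fun j => if j < K then bSeq j else 0

theorem swp_bT (K j : ℕ) (P : RTwo) : swp (bT K j P) = (-1 : ℂ) ^ j • bT K j (swp P) := by
  by_cases h : j < K
  · simp only [bT, if_pos h]; exact swp_bSeq j P
  · simp [bT, if_neg h]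

theorem swp_schur_bT (K m : ℕ) (P : RTwo) :
    swp (schur (bT K) m P) = (-1 : ℂ) ^ m • schur (bT K) m (swp P) := by
  induction m using Nat.strong_induction_on with
  | _ m ih =>
    cases m with
    | zero => rw [schur_zero]; simp
    | succ m =>
      rw [schur_succ_apply, schur_succ_apply, map_smul, map_sum, smul_comm ((-1 : ℂ) ^ (m + 1)),
        Finset.smul_sum (r := (-1 : ℂ) ^ (m + 1))]
      congr 1
      refine Finset.sum_congr rfl fun k hk => ?_
      have hk' := Finset.mem_range.mp hk
      rw [map_smul, swp_bT, ih (m - k) (by omega), map_smul, smul_smul, smul_smul, smul_smul]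
      congr 1
      rw [show m + 1 = k + 1 + (m - k) by omega, pow_add]
      ring

theorem schur_bT_lt (K m : ℕ) (h : m < K) : schur (bT K) m = schur bSeq m := by
  induction m using Nat.strong_induction_on with
  | _ m ih =>
    cases m with
    | zero => rw [schur_zero, schur_zero]
    | succ m =>
      rw [schur_succ, schur_succ]
      congr 1
      refine Finset.sum_congr rfl fun k hk => ?_
      have hk' := Finset.mem_range.mp hk
      rw [ih (m - k) (by omega) (by omega), bT, if_pos (by omega)]

theorem schur_bT_eq (K : ℕ) : schur bSeq (K + 1) = schur (bT (K + 1)) (K + 1) + bSeq (K + 1) := by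
  rw [schur_succ, schur_succ, Finset.sum_range_succ, Finset.sum_range_succ, smul_add, smul_add]
  have e : ∀ k ∈ Finset.range K, ((k + 1 : ℂ)) • (bSeq (k + 1) * schur bSeq (K - k))
      = ((k + 1 : ℂ)) • (bT (K + 1) (k + 1) * schur (bT (K + 1)) (K - k)) := by
    intro k hk
    have hk' := Finset.mem_range.mp hk
    rw [schur_bT_lt _ _ (by omega), bT, if_pos (by omega)]
  have hK : ((K + 1 : ℂ)) ≠ 0 := by exact_mod_cast Nat.succ_ne_zero K
  rw [Finset.sum_congr rfl e, Nat.sub_self, schur_zero, schur_zero, mul_one, mul_one, smul_smul,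
    inv_mul_cancel₀ hK, one_smul]
  simp [bT]

/-- pairs `(u, v)` with `u / v = σ / τ` -/
def Prop2 (σ τ : ROdd) (u v : ROdd) : Prop := u * τ = v * σ

theorem Prop2_pderiv (σ τ : ROdd) (hτ : τ ≠ 0) (i : ℕ)
    (hi : Prop2 σ τ (MvPolynomial.pderiv i σ) (MvPolynomial.pderiv i τ))
    (u v : ROdd) (h : Prop2 σ τ u v) :
    Prop2 σ τ (MvPolynomial.pderiv i u) (MvPolynomial.pderiv i v) := by
  unfold Prop2 at *
  have h1 := congrArg (MvPolynomial.pderiv i) h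
  rw [MvPolynomial.pderiv_mul, MvPolynomial.pderiv_mul] at h1
  have h2 : u * MvPolynomial.pderiv i τ = v * MvPolynomial.pderiv i σ := by
    apply mul_right_cancel₀ hτ
    linear_combination (MvPolynomial.pderiv i τ) * h - v * hi
  linear_combination h1 - h2

/-- the span of the antisymmetric elements -/
noncomputable def antiSub (σ τ : ROdd) : Submodule ℂ RTwo :=
  Submodule.span ℂ {H | ∃ u v x y, Prop2 σ τ u v ∧ Prop2 σ τ x y ∧ H = ten u y - ten v x}

theorem diag_antiSub (σ τ : ROdd) (hτ : τ ≠ 0) (H : RTwo) (h : H ∈ antiSub σ τ) : diag H = 0 := by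
  induction h using Submodule.span_induction with
  | mem H h =>
    obtain ⟨u, v, x, y, h1, h2, rfl⟩ := h
    rw [map_sub, diag_ten, diag_ten]
    unfold Prop2 at *
    apply mul_right_cancel₀ hτ
    linear_combination y * h1 - v * h2
  | zero => simp
  | add a b _ _ ha hb => rw [map_add, ha, hb, add_zero]
  | smul c a _ ha => rw [map_smul, ha, smul_zero]

theorem bSeq_antiSub (σ τ : ROdd) (hτ : τ ≠ 0) (i : ℕ)
    (hi : Prop2 σ τ (MvPolynomial.pderiv i σ) (MvPolynomial.pderiv i τ)) (H : RTwo)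
    (h : H ∈ antiSub σ τ) : bSeq (2 * i + 1) H ∈ antiSub σ τ := by
  induction h using Submodule.span_induction with
  | mem H h =>
    obtain ⟨u, v, x, y, h1, h2, rfl⟩ := h
    rw [bSeq_odd]
    simp only [map_sub, pderiv_inl_ten, pderiv_inr_ten]
    refine Submodule.smul_mem _ _ (Submodule.sub_mem _ ?_ ?_)
    · exact Submodule.subset_span ⟨u, v, _, _, h1, Prop2_pderiv σ τ hτ i hi x y h2, rfl⟩
    · exact Submodule.subset_span ⟨_, _, x, y, Prop2_pderiv σ τ hτ i hi u v h1, h2, rfl⟩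
  | zero => rw [map_zero]; exact Submodule.zero_mem _
  | add a b _ _ ha hb => rw [map_add]; exact Submodule.add_mem _ ha hb
  | smul c a _ ha => rw [map_smul]; exact Submodule.smul_mem _ _ ha

theorem schur_bT_antiSub (σ τ : ROdd) (hτ : τ ≠ 0) (K : ℕ)
    (hK : ∀ i, 2 * i + 1 < K →
      Prop2 σ τ (MvPolynomial.pderiv i σ) (MvPolynomial.pderiv i τ)) (H : RTwo)
    (h : H ∈ antiSub σ τ) (m : ℕ) : schur (bT K) m H ∈ antiSub σ τ := by
  induction m using Nat.strong_induction_on with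
  | _ m ih =>
    cases m with
    | zero => rw [schur_zero]; exact h
    | succ m =>
      rw [schur_succ_apply]
      refine Submodule.smul_mem _ _ (Submodule.sum_mem _ fun k hk => Submodule.smul_mem _ _ ?_)
      have := ih (m - k) (by omega)
      by_cases hk : k + 1 < K
      · rw [bT, if_pos hk]
        by_cases ho : Odd (k + 1)
        · obtain ⟨i, hi⟩ := ho
          rw [hi]
          exact bSeq_antiSub σ τ hτ i (hK i (by omega)) _ this
        · rw [bSeq_even _ ho]; exact Submodule.zero_mem _
      · rw [bT, if_neg hk]; exact Submodule.zero_mem _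

/-- the induction step: odd Schur polynomials vanish on the diagonal -/
theorem all_Prop2 (σ τ : ROdd) (hτ : τ ≠ 0)
    (hs : ∀ i, diag (schur bSeq (2 * i + 1) (ten σ τ)) = 0) (i : ℕ) :
    Prop2 σ τ (MvPolynomial.pderiv i σ) (MvPolynomial.pderiv i τ) := by
  induction i using Nat.strong_induction_on with
  | _ i ih =>
    have h0 : ten σ τ - ten τ σ ∈ antiSub σ τ :=
      Submodule.subset_span ⟨σ, τ, σ, τ, mul_comm _ _, mul_comm _ _, rfl⟩
    have h1 := diag_antiSub σ τ hτ _
      (schur_bT_antiSub σ τ hτ (2 * i + 1) (fun l hl => ih l (by omega)) _ h0 (2 * i + 1))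
    rw [map_sub, map_sub, sub_eq_zero] at h1
    have h2 := congrArg diag (swp_schur_bT (2 * i + 1) (2 * i + 1) (ten σ τ))
    rw [diag_swp, swp_ten, map_smul, ← h1, Odd.neg_one_pow ⟨i, rfl⟩, neg_smul, one_smul] at h2
    have h3 : diag (schur (bT (2 * i + 1)) (2 * i + 1) (ten σ τ)) = 0 := self_eq_neg.mp h2
    have h4 := hs i
    rw [schur_bT_eq, LinearMap.add_apply, map_add, h3, zero_add, bSeq_odd, map_smul, map_sub,
      pderiv_inl_ten, pderiv_inr_ten, diag_ten, diag_ten] at h4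
    have hc : (2 : ℂ) / ((2 * i + 1 : ℕ) : ℂ) ≠ 0 :=
      div_ne_zero two_ne_zero (by exact_mod_cast Nat.succ_ne_zero (2 * i))
    have h5 := (smul_eq_zero.mp h4).resolve_left hc
    unfold Prop2
    linear_combination -h5

theorem diag_aSeq (j : ℕ) : diag (aSeq j) = 0 := by
  by_cases hj : Odd j
  · rw [aSeq, if_pos hj]
    simp [diag]
  · rw [aSeq, if_neg hj, map_zero]

theorem diag_schur_aSeq (m : ℕ) : diag (schur aSeq m) = if m = 0 then 1 else 0 := by
  cases m with
  | zero => rw [schur_zero]; simp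
  | succ m =>
    rw [schur_succ, map_smul, map_sum, Finset.sum_eq_zero]
    · simp
    · intro k hk
      rw [map_smul, map_mul, diag_aSeq, zero_mul, smul_zero]

/-- from the bilinear identity to vanishing on the diagonal -/
theorem diag_schur_of_bilinear (F : RTwo)
    (hF : (∑ᶠ k : ℕ, schur aSeq k * (schur bSeq (k + 0)) F) = F) (i : ℕ) :
    diag (schur bSeq (2 * i + 1) F) = 0 := by
  obtain ⟨N, hN⟩ := schur_bSeq_vanish F
  have hN' : ∀ m, N + 2 * i + 2 ≤ m → schur bSeq m F = 0 := fun m hm => hN m (by omega)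
  rw [finsum_eq_range F 0 _ hN'] at hF
  have h1 := congrArg (fun P => diag (MvPolynomial.pderiv (Sum.inl i) P)) hF
  simp only [map_sum, add_zero] at h1
  have e : ∀ k ∈ Finset.range (N + 2 * i + 2),
      diag (MvPolynomial.pderiv (Sum.inl i) (schur aSeq k * schur bSeq k F))
      = (if k = 2 * i + 1 then diag (schur bSeq k F) else 0)
        + (if k = 0 then diag (MvPolynomial.pderiv (Sum.inl i) (schur bSeq k F)) else 0) := by
    intro k hk
    rw [MvPolynomial.pderiv_mul, map_add, map_mul, map_mul, diag_schur_aSeq, pderiv_schur_aSeq]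
    congr 1
    · by_cases h : 2 * i + 1 ≤ k
      · rw [if_pos h, diag_schur_aSeq]
        by_cases h' : k = 2 * i + 1
        · rw [if_pos (by omega), if_pos h', one_mul]
        · rw [if_neg (by omega), if_neg h', zero_mul]
      · rw [if_neg h, if_neg (by omega), map_zero, zero_mul]
    · split_ifs <;> simp
  rw [Finset.sum_congr rfl e, Finset.sum_add_distrib, Finset.sum_ite_eq', Finset.sum_ite_eq',
    if_pos (Finset.mem_range.mpr (by omega)), if_pos (Finset.mem_range.mpr (by omega)),
    schur_zero] at h1
  simpa using h1

/-- differentiating the bilinear identity -/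
theorem bilinear_pderiv (F : RTwo) (i : ℕ)
    (hF : (∑ᶠ k : ℕ, schur aSeq k * (schur bSeq (k + 0)) F) = F)
    (hM : (∑ᶠ k : ℕ, schur aSeq k * (schur bSeq (k + (2 * i + 1))) F) = 0) :
    (∑ᶠ k : ℕ, schur aSeq k * (schur bSeq (k + 0)) (MvPolynomial.pderiv (Sum.inl i) F))
      = MvPolynomial.pderiv (Sum.inl i) F := by
  obtain ⟨N, hN⟩ := schur_bSeq_vanish F
  have hN' : ∀ m, 2 * i + 1 + N ≤ m → schur bSeq m F = 0 := fun m hm => hN m (by omega)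
  have hN2 : ∀ m, 2 * i + 1 + N ≤ m → schur bSeq m (MvPolynomial.pderiv (Sum.inl i) F) = 0 := by
    intro m hm
    rw [schur_bSeq_pderiv, hN' m hm, map_zero]
  rw [finsum_eq_range F 0 _ hN'] at hF
  rw [finsum_eq_range F _ _ hN] at hM
  rw [finsum_eq_range _ 0 _ hN2]
  have h1 := congrArg (fun P => MvPolynomial.pderiv (Sum.inl i) P) hF
  simp only [map_sum, add_zero, MvPolynomial.pderiv_mul, Finset.sum_add_distrib] at h1
  rw [Finset.sum_range_add, Finset.sum_eq_zero, zero_add] at h1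
  · have e : ∑ k ∈ Finset.range N, MvPolynomial.pderiv (Sum.inl i) (schur aSeq (2 * i + 1 + k))
        * schur bSeq (2 * i + 1 + k) F = 0 := by
      rw [← hM]
      refine Finset.sum_congr rfl fun k _ => ?_
      rw [pderiv_schur_aSeq, if_pos (by omega), show 2 * i + 1 + k - (2 * i + 1) = k by omega,
        add_comm k]
    rw [e, zero_add] at h1
    simpa only [add_zero, schur_bSeq_pderiv] using h1
  · intro k hk
    have := Finset.mem_range.mp hk
    rw [pderiv_schur_aSeq, if_neg (by omega), zero_mul]

theorem nilpotent_step (τ : ROdd) (hτ : τ ≠ 0) (i : ℕ)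
    (h : Prop2 (MvPolynomial.pderiv i τ) τ (MvPolynomial.pderiv i (MvPolynomial.pderiv i τ))
      (MvPolynomial.pderiv i τ)) : MvPolynomial.pderiv i τ = 0 := by
  have hr : ∀ r : ℕ, Prop2 (MvPolynomial.pderiv i τ) τ
      ((fun Q => MvPolynomial.pderiv i Q)^[r + 1] τ) ((fun Q => MvPolynomial.pderiv i Q)^[r] τ) := by
    intro r
    induction r with
    | zero => exact mul_comm _ _
    | succ r ih =>
      rw [Function.iterate_succ_apply' _ r] at ih
      rw [Function.iterate_succ_apply', Function.iterate_succ_apply' _ r]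
      exact Prop2_pderiv _ _ hτ i h _ _ ih
  have hex := pderiv_iter_zero i τ
  classical
  have hs := Nat.find_spec hex
  rcases hq : Nat.find hex with _ | q
  · rw [hq] at hs
    exact absurd hs hτ
  · have hm := Nat.find_min hex (m := q) (by omega)
    rw [hq] at hs
    have := hr q
    unfold Prop2 at this
    rw [hs, zero_mul] at this
    exact (mul_eq_zero.mp this.symm).resolve_left hm

/-- for odd `n ≥ 3`, a nonzero polynomial tau-function of the `n`-th
Sawada-Kotera hierarchy (a BKP tau-function with `Ω_{-pn}(τ) = 0` for all `p ≥ 1`)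
satisfies `∂τ/∂t_{(2j-1)n} = 0` for all `j ≥ 1`.
Here `t_{(2j-1)n}` is variable `((2j-1)n - 1)/2` of `ROdd`. -/
theorem sawada_kotera_tau_independent (n : ℕ) (hodd : Odd n) (hn : 3 ≤ n) (τ : ROdd)
    (hτ : τ ≠ 0) (hBKP : OmegaNeg 0 τ = doubling τ)
    (hred : ∀ p : ℕ, 1 ≤ p → OmegaNeg (p * n) τ = 0) :
    ∀ j : ℕ, 1 ≤ j → MvPolynomial.pderiv (((2 * j - 1) * n - 1) / 2) τ = 0 := by
  intro j hj
  have hodd' : Odd ((2 * j - 1) * n) := Odd.mul ⟨j - 1, by omega⟩ hodd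
  have hM := hred (2 * j - 1) (by omega)
  obtain ⟨i, hi⟩ := hodd'
  rw [hi, show (2 * i + 1 - 1) / 2 = i by omega]
  rw [hi] at hM
  have h1 := bilinear_pderiv (ten τ τ) i hBKP hM
  rw [pderiv_inl_ten] at h1
  exact nilpotent_step τ hτ i
    (all_Prop2 _ τ hτ (diag_schur_of_bilinear _ h1) i)
end
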